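/- Let W^e ⊂ 𝕋² be a nonempty open set and let K₁, K₂ ∈ L¹(𝕋²) ∩ C^∞(𝕋²\{0}). Suppose that for all φ₁, φ₂ ∈ C_c^∞(W^e) and all φ ∈ C_c^∞(W^e), ∫_{W^e} [ (K₁−K₂)∗φ₁ · (−∂₂φ₂ ∂₁φ + ∂₁φ₂ ∂₂φ) + (K₁−K₂)∗φ₂ · (−∂₂φ₁ ∂₁φ + ∂₁φ₁ ∂₂φ) ] dx = 0. Then ∂₁(K₁−K₂)(x−y) = ∂₂(K₁−K₂)(x−y) = 0 for all x, y ∈ W^e with x ≠ y, and consequently ℛ₁g = ℛ₂g on W^e for every g ∈ C_c^∞(W^e). -/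

import Mathlib

/- Common setup: the 2-torus `𝕋² = ℝ²/ℤ²` is modeled by `ℤ²`-periodic functions on
`Pt = ℝ × ℝ`, integrated over the fundamental domain `cube = (0,1] × (0,1]`.
Sobolev spaces and the fractional Laplacian are defined via Fourier coefficients. -/

noncomputable section

open MeasureTheory Filter Set

/-- Points of `ℝ²`. -/
abbrev Pt := ℝ × ℝ

/-- Fundamental domain of the torus `𝕋² = ℝ²/ℤ²`. -/
def cube : Set Pt := Set.Ioc (0:ℝ) 1 ×ˢ Set.Ioc (0:ℝ) 1

/-- A function on `ℝ²` represents a function on the torus iff it is `ℤ²`-periodic. -/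
def Periodic2 (f : Pt → ℂ) : Prop :=
  ∀ x : Pt, ∀ m : ℤ × ℤ, f (x.1 + (m.1 : ℝ), x.2 + (m.2 : ℝ)) = f x

/-- A subset of `ℝ²` represents a subset of the torus iff it is `ℤ²`-translation invariant. -/
def PeriodicSet (W : Set Pt) : Prop :=
  ∀ x ∈ W, ∀ m : ℤ × ℤ, (x.1 + (m.1 : ℝ), x.2 + (m.2 : ℝ)) ∈ W

/-- `k · x` for a frequency `k ∈ ℤ²` and a point `x ∈ ℝ²`. -/
def kdot (k : ℤ × ℤ) (x : Pt) : ℝ := (k.1 : ℝ) * x.1 + (k.2 : ℝ) * x.2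

/-- The Fourier coefficient `f̂(k) = ∫_{𝕋²} f(x) e^{-2πik·x} dx`. -/
def fcoeff (f : Pt → ℂ) (k : ℤ × ℤ) : ℂ :=
  ∫ x in cube, f x * Complex.exp (-(2 * Real.pi * Complex.I) * (kdot k x : ℂ))

/-- `|k|²` for `k ∈ ℤ²`. -/
def ksq (k : ℤ × ℤ) : ℝ := (k.1 : ℝ) ^ 2 + (k.2 : ℝ) ^ 2

/-- The squared Sobolev norm `‖f‖²_{H^r} = Σ_k (1+|k|²)^r |f̂(k)|²`. -/
def sobNormSq (r : ℝ) (f : Pt → ℂ) : ℝ :=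
  ∑' k : ℤ × ℤ, (1 + ksq k) ^ r * ‖fcoeff f k‖ ^ 2

/-- The Sobolev norm `‖f‖_{H^r}`. -/
def sobNorm (r : ℝ) (f : Pt → ℂ) : ℝ := Real.sqrt (sobNormSq r f)

/-- Membership `f ∈ H^r(𝕋²)`: square-summability of the weighted Fourier coefficients. -/
def MemH (r : ℝ) (f : Pt → ℂ) : Prop :=
  Summable fun k : ℤ × ℤ => (1 + ksq k) ^ r * ‖fcoeff f k‖ ^ 2

/-- The fractional Laplacian `(-Δ)^r f(x) = Σ_k |2πk|^{2r} f̂(k) e^{2πik·x}`. -/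
def fracLap (r : ℝ) (f : Pt → ℂ) (x : Pt) : ℂ :=
  ∑' k : ℤ × ℤ, ((4 * Real.pi ^ 2 * ksq k) ^ r : ℝ) * fcoeff f k *
    Complex.exp ((2 * Real.pi * Complex.I) * (kdot k x : ℂ))

/-- The `L^p(𝕋²)` norm. -/
def lpNorm (p : ℝ) (f : Pt → ℂ) : ℝ := (∫ x in cube, ‖f x‖ ^ p) ^ (1 / p)

/-- Membership in `L^p(𝕋²)` (for `p < ∞`). -/
def MemLq (p : ℝ) (f : Pt → ℂ) : Prop := IntegrableOn (fun x => ‖f x‖ ^ p) cube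

/-- First spatial partial derivative. -/
def pd1 (f : Pt → ℂ) (x : Pt) : ℂ := fderiv ℝ f x (1, 0)

/-- Second spatial partial derivative. -/
def pd2 (f : Pt → ℂ) (x : Pt) : ℂ := fderiv ℝ f x (0, 1)

/-- Periodic convolution `(K ∗ θ)(x) = ∫_{𝕋²} K(x-y) θ(y) dy` with a real kernel `K`. -/
def conv (K : Pt → ℝ) (θ : Pt → ℂ) (x : Pt) : ℂ :=
  ∫ y in cube, (K (x.1 - y.1, x.2 - y.2) : ℂ) * θ y

/-- The divergence-free drift `ℛθ = (-∂₂(K∗θ), ∂₁(K∗θ))`. -/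
def drift (K : Pt → ℝ) (θ : Pt → ℂ) (x : Pt) : ℂ × ℂ :=
  (-(pd2 (conv K θ) x), pd1 (conv K θ) x)

/-- The transport term `ℛθ · ∇θ`. -/
def nonlinTerm (K : Pt → ℝ) (θ : Pt → ℂ) (x : Pt) : ℂ :=
  (drift K θ x).1 * pd1 θ x + (drift K θ x).2 * pd2 θ x

/-- The cross transport term `ℛw₁ · ∇w₂ + ℛw₂ · ∇w₁`. -/
def crossTerm (K : Pt → ℝ) (w₁ w₂ : Pt → ℂ) (x : Pt) : ℂ :=
  (drift K w₁ x).1 * pd1 w₂ x + (drift K w₁ x).2 * pd2 w₂ x +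
  (drift K w₂ x).1 * pd1 w₁ x + (drift K w₂ x).2 * pd2 w₁ x

/-- The structural assumptions (Ass1)–(Ass3) on the kernel `K` of the multiplier `𝒦`:
`K ∈ L¹(𝕋²) ∩ C^∞(𝕋²\{0})`, Fourier coefficients comparable to `|k|⁻¹`,
and `L^p`-boundedness of the drift `ℛ` for all `p ∈ (1,∞)`. -/
structure KernelAssumptions (K : Pt → ℝ) : Prop where
  periodic : ∀ x : Pt, ∀ m : ℤ × ℤ, K (x.1 + (m.1 : ℝ), x.2 + (m.2 : ℝ)) = K x
  integrable : IntegrableOn K cube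
  smooth : ∀ x : Pt, (¬ ∃ m : ℤ × ℤ, x = ((m.1 : ℝ), (m.2 : ℝ))) → ContDiffAt ℝ (⊤ : ℕ∞) K x
  fourier_bounds : ∃ c C : ℝ, 0 < c ∧ 0 < C ∧ ∀ k : ℤ × ℤ, k ≠ 0 →
    (fcoeff (fun x => (K x : ℂ)) k).im = 0 ∧
    c * (Real.sqrt (ksq k))⁻¹ ≤ (fcoeff (fun x => (K x : ℂ)) k).re ∧
    (fcoeff (fun x => (K x : ℂ)) k).re ≤ C * (Real.sqrt (ksq k))⁻¹
  lp_bounded : ∀ p : ℝ, 1 < p → ∃ Cp : ℝ, ∀ θ : Pt → ℂ, Periodic2 θ → MemLq p θ →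
    lpNorm p (fun x => ‖drift K θ x‖) ≤ Cp * lpNorm p θ

/-- `θ` is a solution of the active scalar equation
`∂_t θ + ℛθ·∇θ + (-Δ)^α θ = f` on `𝕋² × (0,T)` with `θ(0) = 0`. -/
structure IsSolASE (K : Pt → ℝ) (α T : ℝ) (f θ : ℝ → Pt → ℂ) : Prop where
  init : ∀ x : Pt, θ 0 x = 0
  periodic : ∀ t : ℝ, Periodic2 (θ t)
  eq : ∀ t ∈ Set.Ioo 0 T, ∀ x : Pt,
    deriv (fun s => θ s x) t + nonlinTerm K (θ t) x + fracLap α (θ t) x = f t x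

/-- `u` is a solution of the linear fractional diffusion equation
`∂_t u + (-Δ)^α u = f` on `𝕋² × (0,T)` with `u(0) = 0`. -/
structure IsSolLin (α T : ℝ) (f u : ℝ → Pt → ℂ) : Prop where
  init : ∀ x : Pt, u 0 x = 0
  periodic : ∀ t : ℝ, Periodic2 (u t)
  eq : ∀ t ∈ Set.Ioo 0 T, ∀ x : Pt,
    deriv (fun s => u s x) t + fracLap α (u t) x = f t x

/-- `f ∈ C_c^∞(W × (0,T))`: jointly smooth, periodic in space, spatially supported in a
closed subset of `W` and temporally compactly supported in `(0,T)`. -/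
structure TestFun (W : Set Pt) (T : ℝ) (f : ℝ → Pt → ℂ) : Prop where
  smooth : ContDiff ℝ (⊤ : ℕ∞) (fun p : ℝ × Pt => f p.1 p.2)
  periodic : ∀ t : ℝ, Periodic2 (f t)
  supp_space : ∃ F : Set Pt, IsClosed F ∧ F ⊆ W ∧ ∀ t : ℝ, ∀ x ∉ F, f t x = 0
  supp_time : ∃ a b : ℝ, 0 < a ∧ a ≤ b ∧ b < T ∧ ∀ t ∉ Set.Icc a b, ∀ x : Pt, f t x = 0

/-- `g ∈ C_c^∞(U)` for an (open) subset `U` of the torus. -/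
structure TestFunSp (U : Set Pt) (g : Pt → ℂ) : Prop where
  smooth : ContDiff ℝ (⊤ : ℕ∞) g
  periodic : Periodic2 g
  supp : ∃ F : Set Pt, IsClosed F ∧ F ⊆ U ∧ ∀ x ∉ F, g x = 0

/-- `θ ∈ L^∞(0,T; H^s(𝕋²))`. -/
def MemLinfH (T s : ℝ) (θ : ℝ → Pt → ℂ) : Prop :=
  (∀ t ∈ Set.Icc 0 T, MemH s (θ t)) ∧
  BddAbove ((fun t : ℝ => sobNorm s (θ t)) '' Set.Icc 0 T)

/-- The `L^∞(0,T; H^s(𝕋²))` norm. -/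
def linfHNorm (T s : ℝ) (θ : ℝ → Pt → ℂ) : ℝ :=
  ⨆ t : Set.Icc (0:ℝ) T, sobNorm s (θ t)

/-- `θ ∈ L²(0,T; H^s(𝕋²))`. -/
def MemL2H (T s : ℝ) (θ : ℝ → Pt → ℂ) : Prop :=
  (∀ t ∈ Set.Ioc 0 T, MemH s (θ t)) ∧
  IntegrableOn (fun t => sobNormSq s (θ t)) (Set.Ioc 0 T)

/-- The `L²(0,T; H^s(𝕋²))` norm. -/
def l2HNorm (T s : ℝ) (θ : ℝ → Pt → ℂ) : ℝ :=
  Real.sqrt (∫ t in Set.Ioc 0 T, sobNormSq s (θ t))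

/-- `θ ∈ L^∞(0,T; L^q(𝕋²))`. -/
def MemLinfLq (T q : ℝ) (θ : ℝ → Pt → ℂ) : Prop :=
  (∀ t ∈ Set.Icc 0 T, MemLq q (θ t)) ∧
  BddAbove ((fun t : ℝ => lpNorm q (θ t)) '' Set.Icc 0 T)

/-- `f ∈ L¹(0,T; L^q(𝕋²))`. -/
def MemL1Lq (T q : ℝ) (f : ℝ → Pt → ℂ) : Prop :=
  (∀ t ∈ Set.Ioc 0 T, MemLq q (f t)) ∧
  IntegrableOn (fun t => lpNorm q (f t)) (Set.Ioc 0 T)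

/-- `f ∈ L²(0,T; L²(𝕋²))`. -/
def MemL2L2 (T : ℝ) (f : ℝ → Pt → ℂ) : Prop :=
  (∀ t ∈ Set.Ioc 0 T, MemLq 2 (f t)) ∧
  IntegrableOn (fun t => ∫ x in cube, ‖f t x‖ ^ 2) (Set.Ioc 0 T)

/-- The `L²(0,T; L²(𝕋²))` norm. -/
def l2L2Norm (T : ℝ) (f : ℝ → Pt → ℂ) : ℝ :=
  Real.sqrt (∫ t in Set.Ioc 0 T, ∫ x in cube, ‖f t x‖ ^ 2)

/-- `u ∈ C([0,T]; L²(𝕋²))`: continuity in time w.r.t. the `L²(𝕋²)` norm. -/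
def ContL2 (T : ℝ) (u : ℝ → Pt → ℂ) : Prop :=
  ∀ t ∈ Set.Icc 0 T, (∀ s ∈ Set.Icc 0 T, MemLq 2 (fun x => u s x - u t x)) ∧
    Tendsto (fun s => lpNorm 2 (fun x => u s x - u t x))
      (nhdsWithin t (Set.Icc 0 T)) (nhds 0)

/-- The `C([0,T]; L²(𝕋²))` (sup-in-time of the `L²` norm) norm. -/
def cL2Norm (T : ℝ) (u : ℝ → Pt → ℂ) : ℝ :=
  ⨆ t : Set.Icc (0:ℝ) T, lpNorm 2 (u t)

end

open MeasureTheory Filter Set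

/-- The integer lattice in the plane. -/
def latt : Set Pt := {x | ∃ m : ℤ × ℤ, x = ((m.1 : ℝ), (m.2 : ℝ))}

lemma latt_eq_range : latt = Set.range (fun m : ℤ × ℤ => (((m.1 : ℝ), (m.2 : ℝ)) : Pt)) := by
  ext x; constructor
  · rintro ⟨m, rfl⟩; exact ⟨m, rfl⟩
  · rintro ⟨m, rfl⟩; exact ⟨m, rfl⟩

lemma latt_countable : latt.Countable := by
  rw [latt_eq_range]; exact Set.countable_range _

lemma latt_closed : IsClosed latt := by
  have : latt = (Set.range ((↑) : ℤ → ℝ)) ×ˢ (Set.range ((↑) : ℤ → ℝ)) := by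
    ext x; constructor
    · rintro ⟨m, rfl⟩; exact ⟨⟨m.1, rfl⟩, ⟨m.2, rfl⟩⟩
    · rintro ⟨⟨a, ha⟩, ⟨b, hb⟩⟩; exact ⟨(a, b), Prod.ext ha.symm hb.symm⟩
  rw [this]
  exact Int.isClosedEmbedding_coe_real.isClosed_range.prod
    Int.isClosedEmbedding_coe_real.isClosed_range

lemma meas_of_smooth (K : Pt → ℝ) (h : ∀ x, x ∉ latt → ContinuousAt K x) : Measurable K := by
  refine measurable_of_restrict_of_restrict_compl latt_closed.measurableSet ?_ ?_
  · have : Countable latt := latt_countable.to_subtype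
    exact measurable_of_countable _
  · have : ContinuousOn K lattᶜ := fun x hx => (h x hx).continuousWithinAt
    exact this.domRestrict.measurable

lemma cube_meas : MeasurableSet cube := measurableSet_Ioc.prod measurableSet_Ioc

lemma cube_finite : volume cube < ⊤ := by
  have : cube ⊆ Set.Icc (0:ℝ) 1 ×ˢ Set.Icc (0:ℝ) 1 :=
    Set.prod_mono Ioc_subset_Icc_self Ioc_subset_Icc_self
  exact (measure_mono this).trans_lt (isCompact_Icc.prod isCompact_Icc).measure_lt_top

lemma cont_int (f : Pt → ℝ) (hf : Continuous f) : IntegrableOn f cube := by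
  have : cube ⊆ Set.Icc (0:ℝ) 1 ×ˢ Set.Icc (0:ℝ) 1 :=
    Set.prod_mono Ioc_subset_Icc_self Ioc_subset_Icc_self
  exact (hf.continuousOn.integrableOn_compact (isCompact_Icc.prod isCompact_Icc)).mono_set this

lemma K_int (K : Pt → ℝ)
    (hper : ∀ x : Pt, ∀ m : ℤ × ℤ, K (x.1 + (m.1 : ℝ), x.2 + (m.2 : ℝ)) = K x)
    (hIntg : IntegrableOn K cube) (x : Pt) :
    IntegrableOn (fun y : Pt => K (x.1 - y.1, x.2 - y.2)) cube := by
  -- integrable on each translate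
  have h1 : ∀ m : ℤ × ℤ, IntegrableOn K ((fun z : Pt => z + ((m.1:ℝ),(m.2:ℝ))) ⁻¹' cube) := by
    intro m
    have mp := measurePreserving_add_right (volume : Measure Pt) (((m.1:ℝ),(m.2:ℝ)) : Pt)
    have := (mp.integrableOn_comp_preimage (MeasurableEquiv.addRight _).measurableEmbedding
      (f := K) (s := cube)).2 hIntg
    refine this.congr_fun (fun z _ => ?_) (measurable_add_const _ cube_meas)
    exact hper z m
  have h2 : IntegrableOn K (⋃ m ∈ (Finset.Icc (-⌈x.1⌉ - 1) (-⌈x.1⌉ + 3) ×ˢ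
      Finset.Icc (-⌈x.2⌉ - 1) (-⌈x.2⌉ + 3) : Finset (ℤ × ℤ)),
      ((fun z : Pt => z + ((m.1:ℝ),(m.2:ℝ))) ⁻¹' cube)) := by
    rw [integrableOn_finset_iUnion]
    intro m _; exact h1 m
  have mp := Measure.measurePreserving_sub_left (volume : Measure Pt) x
  have h3 : IntegrableOn K ((fun y : Pt => x - y) '' cube) := by
    refine h2.mono_set ?_
    rintro _ ⟨y, ⟨⟨hy1, hy2⟩, ⟨hy3, hy4⟩⟩, rfl⟩
    have key : ∀ a b : ℝ, 0 < b → b ≤ 1 → ∃ m : ℤ, m ∈ Finset.Icc (-⌈a⌉ - 1) (-⌈a⌉ + 3) ∧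
        (a - b) + m ∈ Set.Ioc (0:ℝ) 1 := by
      intro a b hb hb'
      refine ⟨1 - ⌈a - b⌉, ?_, ?_⟩
      · have e1 : ⌈a - b⌉ ≤ ⌈a⌉ := Int.ceil_mono (by linarith)
        have e2 : ⌈a⌉ - 1 ≤ ⌈a - b⌉ := by
          rw [← Int.ceil_sub_one]; exact Int.ceil_mono (by linarith)
        rw [Finset.mem_Icc]; omega
      · have := Int.le_ceil (a - b)
        have := Int.ceil_lt_add_one (a - b)
        push_cast
        constructor <;> linarith
    obtain ⟨m1, hm1, hm1'⟩ := key x.1 y.1 hy1 hy2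
    obtain ⟨m2, hm2, hm2'⟩ := key x.2 y.2 hy3 hy4
    simp only [Set.mem_iUnion]
    exact ⟨(m1, m2), Finset.mem_product.2 ⟨hm1, hm2⟩, hm1', hm2'⟩
  have := (mp.integrableOn_image (MeasurableEquiv.subLeft x).measurableEmbedding
    (f := K) (s := cube)).1 h3
  exact this

lemma ball_diff_connected (c : Pt) (r : ℝ) (hr : 0 < r) (s : Set Pt) (hs : s.Countable) :
    IsPreconnected (Metric.ball c r \ s) := by
  let e := OpenPartialHomeomorph.univBall c r
  have hsrc : e.source = univ := OpenPartialHomeomorph.univBall_source c r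
  have htgt : e.target = Metric.ball c r := OpenPartialHomeomorph.univBall_target c hr
  have hinj : Function.Injective e := by
    have := e.injOn
    rw [hsrc] at this
    exact Set.injOn_univ.1 this
  have hc : (e ⁻¹' s).Countable := hs.preimage hinj
  have h1 := (hc.isConnected_compl_of_one_lt_rank (by
    rw [← Module.finrank_eq_rank]; simp)).isPreconnected
  have hcont : Continuous e := by
    have := e.continuousOn
    rw [hsrc] at this
    exact continuousOn_univ.1 this
  have := h1.image e hcont.continuousOn
  convert this using 1
  ext z; constructor
  · rintro ⟨hz, hzs⟩
    rw [← htgt] at hz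
    exact ⟨e.symm z, by simpa [e.right_inv hz] using hzs, e.right_inv hz⟩
  · rintro ⟨w, hw, rfl⟩
    exact ⟨htgt ▸ e.map_source (by rw [hsrc]; trivial), hw⟩

/-- Smooth one-periodic plateau: `1` at distance at most `r` from `a + ℤ`, `0` at distance
at least `R`. -/
noncomputable def plat (a r R t : ℝ) : ℝ :=
  Real.smoothTransition ((Real.cos (2 * Real.pi * (t - a)) - Real.cos (2 * Real.pi * R)) /
    (Real.cos (2 * Real.pi * r) - Real.cos (2 * Real.pi * R)))

/-- Signed distance to the nearest integer. -/
noncomputable def sd (s : ℝ) : ℝ := s - round s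

lemma sd_abs_le (s : ℝ) : |sd s| ≤ 1 / 2 := abs_sub_round s

lemma cos_sd (s : ℝ) : Real.cos (2 * Real.pi * s) = Real.cos (2 * Real.pi * |sd s|) := by
  have h : Real.cos (2 * Real.pi * |sd s|) = Real.cos (2 * Real.pi * sd s) := by
    rw [← Real.cos_abs (2 * Real.pi * sd s), abs_mul, abs_of_pos Real.two_pi_pos]
  rw [h, sd, show 2 * Real.pi * (s - round s) = 2 * Real.pi * s - (round s : ℤ) * (2 * Real.pi) by
    ring, Real.cos_sub_int_mul_two_pi]

lemma sin_sd (s : ℝ) : Real.sin (2 * Real.pi * s) = Real.sin (2 * Real.pi * sd s) := by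
  rw [sd, show 2 * Real.pi * (s - round s) = 2 * Real.pi * s - (round s : ℤ) * (2 * Real.pi) by
    ring, Real.sin_sub_int_mul_two_pi]

lemma cos_lt_iff {x y : ℝ} (hx : 0 ≤ x) (hx' : x ≤ 1 / 2) (hy : 0 ≤ y) (hy' : y ≤ 1 / 2) :
    Real.cos (2 * Real.pi * x) < Real.cos (2 * Real.pi * y) ↔ y < x := by
  have hp := Real.pi_pos
  rw [Real.strictAntiOn_cos.lt_iff_gt ⟨by positivity, by nlinarith⟩ ⟨by positivity, by nlinarith⟩]
  exact mul_lt_mul_iff_right₀ (by positivity)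

lemma cos_le_iff {x y : ℝ} (hx : 0 ≤ x) (hx' : x ≤ 1 / 2) (hy : 0 ≤ y) (hy' : y ≤ 1 / 2) :
    Real.cos (2 * Real.pi * x) ≤ Real.cos (2 * Real.pi * y) ↔ y ≤ x := by
  rw [← not_lt, cos_lt_iff hy hy' hx hx', not_lt]

section plat
variable {a r R : ℝ}

lemma plat_contDiff : ContDiff ℝ (⊤ : ℕ∞) (plat a r R) := by
  unfold plat
  apply Real.smoothTransition.contDiff.comp
  apply ContDiff.div_const
  apply ContDiff.sub _ contDiff_const
  apply Real.contDiff_cos.comp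
  fun_prop

lemma plat_per (t : ℝ) (m : ℤ) : plat a r R (t + m) = plat a r R t := by
  unfold plat
  rw [show 2 * Real.pi * (t + m - a) = 2 * Real.pi * (t - a) + m * (2 * Real.pi) by ring,
    Real.cos_add_int_mul_two_pi]

lemma plat_nonneg (t : ℝ) : 0 ≤ plat a r R t := Real.smoothTransition.nonneg _
lemma plat_le_one (t : ℝ) : plat a r R t ≤ 1 := Real.smoothTransition.le_one _

lemma plat_ne_zero (hr : 0 ≤ r) (hrR : r < R) (hR : R ≤ 1 / 2) {t : ℝ} :
    plat a r R t ≠ 0 ↔ |sd (t - a)| < R := by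
  have hd : 0 < Real.cos (2 * Real.pi * r) - Real.cos (2 * Real.pi * R) :=
    sub_pos.2 ((cos_lt_iff (by linarith) hR hr (by linarith)).2 hrR)
  rw [plat, Ne, Real.smoothTransition.zero_iff_nonpos, not_le, div_pos_iff_of_pos_right hd,
    sub_pos, cos_sd (t - a), cos_lt_iff (by linarith) hR (abs_nonneg _) (sd_abs_le _)]

lemma plat_eq_one (hr : 0 ≤ r) (hrR : r < R) (hR : R ≤ 1 / 2) {t : ℝ} :
    plat a r R t = 1 ↔ |sd (t - a)| ≤ r := by
  have hd : 0 < Real.cos (2 * Real.pi * r) - Real.cos (2 * Real.pi * R) :=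
    sub_pos.2 ((cos_lt_iff (by linarith) hR hr (by linarith)).2 hrR)
  rw [plat, Real.smoothTransition.eq_one_iff_one_le, one_le_div hd, sub_le_sub_iff_right,
    cos_sd (t - a), cos_le_iff hr (by linarith) (abs_nonneg _) (sd_abs_le _)]

lemma plat_deriv_of_zero {t : ℝ} (h : plat a r R t = 0) : deriv (plat a r R) t = 0 := by
  apply IsLocalMin.deriv_eq_zero
  exact Filter.Eventually.of_forall fun s => h ▸ plat_nonneg s

lemma plat_deriv_of_one {t : ℝ} (h : plat a r R t = 1) : deriv (plat a r R) t = 0 := by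
  apply IsLocalMax.deriv_eq_zero
  exact Filter.Eventually.of_forall fun s => h ▸ plat_le_one s

lemma plat_deriv_ne (hr : 0 ≤ r) (hrR : r < R) (hR : R ≤ 1 / 2) {t : ℝ}
    (h : deriv (plat a r R) t ≠ 0) : r < |sd (t - a)| ∧ |sd (t - a)| < R := by
  constructor
  · by_contra hc
    exact h (plat_deriv_of_one ((plat_eq_one hr hrR hR).2 (not_lt.1 hc)))
  · exact (plat_ne_zero hr hrR hR).1 fun hc => h (plat_deriv_of_zero hc)

lemma plat_deriv_formula (hr : 0 ≤ r) (hrR : r < R) (hR : R ≤ 1 / 2) (t : ℝ) :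
    ∃ k : ℝ, 0 ≤ k ∧ deriv (plat a r R) t = - k * Real.sin (2 * Real.pi * sd (t - a)) := by
  have hd : 0 < Real.cos (2 * Real.pi * r) - Real.cos (2 * Real.pi * R) :=
    sub_pos.2 ((cos_lt_iff (by linarith) hR hr (by linarith)).2 hrR)
  set D := Real.cos (2 * Real.pi * r) - Real.cos (2 * Real.pi * R) with hD
  have h1 : HasDerivAt (fun t => (Real.cos (2 * Real.pi * (t - a)) - Real.cos (2 * Real.pi * R)) / D)
      ((-Real.sin (2 * Real.pi * (t - a)) * (2 * Real.pi * 1)) / D) t := by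
    apply HasDerivAt.div_const
    apply HasDerivAt.sub_const
    apply HasDerivAt.cos
    exact ((hasDerivAt_id t).sub_const a).const_mul _
  have h2 := (((Real.smoothTransition.contDiff (n := 1)).differentiable (by norm_num))
    ((Real.cos (2 * Real.pi * (t - a)) - Real.cos (2 * Real.pi * R)) / D)).hasDerivAt
  have h3 : HasDerivAt (plat a r R) _ t := h2.comp t h1
  refine ⟨deriv Real.smoothTransition
    ((Real.cos (2 * Real.pi * (t - a)) - Real.cos (2 * Real.pi * R)) / D) * (2 * Real.pi) / D,
    ?_, ?_⟩
  · have := Real.smoothTransition.monotone.deriv_nonneg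
      (x := (Real.cos (2 * Real.pi * (t - a)) - Real.cos (2 * Real.pi * R)) / D)
    have := Real.pi_pos
    positivity
  · rw [h3.deriv, sin_sd]; ring

lemma plat_deriv_pos (hr : 0 ≤ r) (hrR : r < R) (hR : R ≤ 1 / 2) {t : ℝ}
    (h : 0 < deriv (plat a r R) t) : sd (t - a) < -r ∧ -R < sd (t - a) := by
  obtain ⟨h1, h2⟩ := plat_deriv_ne hr hrR hR h.ne'
  obtain ⟨k, hk, e⟩ := plat_deriv_formula (a := a) hr hrR hR t
  have hneg : sd (t - a) < 0 := by
    by_contra hc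
    push Not at hc
    have := Real.sin_nonneg_of_nonneg_of_le_pi (x := 2 * Real.pi * sd (t - a))
      (by have := Real.pi_pos; positivity)
      (by have := Real.pi_pos; have := (abs_le.1 (sd_abs_le (t - a))).2; nlinarith)
    nlinarith
  rw [abs_of_neg hneg] at h1 h2
  constructor <;> linarith

lemma plat_deriv_neg (hr : 0 ≤ r) (hrR : r < R) (hR : R ≤ 1 / 2) {t : ℝ}
    (h : deriv (plat a r R) t < 0) : r < sd (t - a) ∧ sd (t - a) < R := by
  obtain ⟨h1, h2⟩ := plat_deriv_ne hr hrR hR h.ne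
  obtain ⟨k, hk, e⟩ := plat_deriv_formula (a := a) hr hrR hR t
  have hpos : 0 < sd (t - a) := by
    by_contra hc
    push Not at hc
    have := Real.sin_nonpos_of_nonpos_of_neg_pi_le (x := 2 * Real.pi * sd (t - a))
      (by have := Real.pi_pos; nlinarith)
      (by have := Real.pi_pos; have := (abs_le.1 (sd_abs_le (t - a))).1; nlinarith)
    nlinarith
  rw [abs_of_pos hpos] at h1 h2
  constructor <;> linarith

end plat

lemma deriv_per (f : ℝ → ℝ) (hf : ∀ t, ∀ m : ℤ, f (t + m) = f t) (t : ℝ) (m : ℤ) :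
    deriv f (t + m) = deriv f t := by
  rw [← deriv_comp_add_const]
  congr 1
  ext s; exact hf s m

lemma int_pos (g : ℝ → ℝ) (hg : Continuous g) (hp : ∀ t, ∀ m : ℤ, g (t + m) = g t)
    (h0 : ∀ t, 0 ≤ g t) (t₁ : ℝ) (h1 : g t₁ ≠ 0) : 0 < ∫ t in Set.Ioc (0:ℝ) 1, g t := by
  have hper : Function.Periodic g 1 := fun t => by simpa using hp t 1
  rw [← intervalIntegral.integral_of_le zero_le_one]
  have := hper.intervalIntegral_add_eq 0 t₁
  rw [zero_add] at this
  rw [this]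
  exact intervalIntegral.integral_pos (by linarith) hg.continuousOn (fun x _ => h0 x)
    ⟨t₁, ⟨le_rfl, by linarith⟩, lt_of_le_of_ne (h0 _) h1.symm⟩

lemma int_deriv_zero (f : ℝ → ℝ) (hf : ContDiff ℝ (⊤ : ℕ∞) f)
    (hp : ∀ t, ∀ m : ℤ, f (t + m) = f t) : ∫ t in Set.Ioc (0:ℝ) 1, deriv f t = 0 := by
  rw [← intervalIntegral.integral_of_le zero_le_one]
  rw [intervalIntegral.integral_deriv_eq_sub]
  · have := hp 0 1
    simp at this; simp [this]
  · intro x _; exact hf.differentiable (by simp) x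
  · exact (hf.continuous_deriv (by simp)).intervalIntegrable _ _

lemma sd_per_near {W : Set Pt} (hper : PeriodicSet W) {c x : Pt} {ρ : ℝ}
    (hb : Metric.ball c ρ ⊆ W) (h1 : |sd (x.1 - c.1)| < ρ) (h2 : |sd (x.2 - c.2)| < ρ) :
    x ∈ W := by
  have h : ((x.1 - round (x.1 - c.1), x.2 - round (x.2 - c.2)) : Pt) ∈ W := by
    apply hb
    rw [Metric.mem_ball, Prod.dist_eq, max_lt_iff, Real.dist_eq, Real.dist_eq]
    unfold sd at h1 h2
    constructor
    · change |x.1 - (round (x.1 - c.1) : ℝ) - c.1| < ρ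
      rwa [sub_right_comm]
    · change |x.2 - (round (x.2 - c.2) : ℝ) - c.2| < ρ
      rwa [sub_right_comm]
  have := hper _ h (round (x.1 - c.1), round (x.2 - c.2))
  simpa using this

lemma sign_lemma (L : Pt → ℝ) (hm : Measurable L)
    (hIntg : ∀ x : Pt, IntegrableOn (fun y : Pt => L (x.1 - y.1, x.2 - y.2)) cube)
    (u ω : Pt → ℝ) (hu : Continuous u) (hω : Continuous ω) (hu0 : ∀ y, 0 ≤ u y)
    (hu1 : ∀ y, u y ≤ 1)
    (hI : 0 < ∫ y in cube, u y) (hω0 : ∫ x in cube, ω x = 0) (hω1 : 0 < ∫ x in cube, |ω x|)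
    (c1 c2 C : ℝ) (hc : c1 < c2)
    (hpos : ∀ x y : Pt, 0 < ω x → u y ≠ 0 →
      -C ≤ L (x.1 - y.1, x.2 - y.2) ∧ L (x.1 - y.1, x.2 - y.2) ≤ c1)
    (hneg : ∀ x y : Pt, ω x < 0 → u y ≠ 0 →
      c2 ≤ L (x.1 - y.1, x.2 - y.2) ∧ L (x.1 - y.1, x.2 - y.2) ≤ C)
    (H : ∫ x in cube, (∫ y in cube, L (x.1 - y.1, x.2 - y.2) * u y) * ω x = 0) : False := by
  set I := ∫ y in cube, u y with hIdef
  set G : Pt → ℝ := fun x => ∫ y in cube, L (x.1 - y.1, x.2 - y.2) * u y with hG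
  have hui : IntegrableOn u cube := cont_int u hu
  have hLu : ∀ x : Pt, IntegrableOn (fun y : Pt => L (x.1 - y.1, x.2 - y.2) * u y) cube := by
    intro x
    refine (hIntg x).mul_bdd (c := 1) hu.aestronglyMeasurable (Eventually.of_forall fun y => ?_)
    rw [Real.norm_of_nonneg (hu0 y)]; exact hu1 y
  have hGm : StronglyMeasurable G := by
    have : StronglyMeasurable (fun p : Pt × Pt => L (p.1.1 - p.2.1, p.1.2 - p.2.2) * u p.2) := by
      apply Measurable.stronglyMeasurable
      apply Measurable.mul
      · apply hm.comp; fun_prop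
      · exact hu.measurable.comp measurable_snd
    exact this.integral_prod_right'
  have up : ∀ x : Pt, ∀ c : ℝ, (∀ y, u y ≠ 0 → L (x.1 - y.1, x.2 - y.2) ≤ c) → G x ≤ c * I := by
    intro x c h
    rw [hIdef, ← integral_const_mul]
    refine integral_mono (hLu x) (hui.const_mul c) fun y => ?_
    by_cases hy : u y = 0
    · simp [hy]
    · exact mul_le_mul_of_nonneg_right (h y hy) (hu0 y)
  have lo : ∀ x : Pt, ∀ c : ℝ, (∀ y, u y ≠ 0 → c ≤ L (x.1 - y.1, x.2 - y.2)) → c * I ≤ G x := by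
    intro x c h
    rw [hIdef, ← integral_const_mul]
    refine integral_mono (hui.const_mul c) (hLu x) fun y => ?_
    by_cases hy : u y = 0
    · simp [hy]
    · exact mul_le_mul_of_nonneg_right (h y hy) (hu0 y)
  have hωi : IntegrableOn ω cube := cont_int ω hω
  have hωa : IntegrableOn (fun x => |ω x|) cube := cont_int _ hω.abs
  have hGω : IntegrableOn (fun x => G x * ω x) cube := by
    refine (hωa.const_mul ((|C| + |c1| + |c2|) * I)).mono'
      (hGm.mul hω.stronglyMeasurable).aestronglyMeasurable (Eventually.of_forall fun x => ?_)
    rw [Real.norm_eq_abs, abs_mul]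
    have a1 := neg_abs_le C
    have a2 := le_abs_self C
    have a3 := neg_abs_le c1
    have a4 := le_abs_self c1
    have a5 := neg_abs_le c2
    have a6 := le_abs_self c2
    rcases lt_trichotomy (ω x) 0 with h | h | h
    · have b1 := up x C fun y hy => (hneg x y h hy).2
      have b2 := lo x c2 fun y hy => (hneg x y h hy).1
      refine mul_le_mul_of_nonneg_right ?_ (abs_nonneg _)
      rw [abs_le]
      constructor <;> nlinarith [abs_nonneg C, abs_nonneg c1, abs_nonneg c2]
    · simp [h]
    · have b1 := up x c1 fun y hy => (hpos x y h hy).2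
      have b2 := lo x (-C) fun y hy => (hpos x y h hy).1
      refine mul_le_mul_of_nonneg_right ?_ (abs_nonneg _)
      rw [abs_le]
      constructor <;> nlinarith [abs_nonneg C, abs_nonneg c1, abs_nonneg c2]
  have key : ∀ x, G x * ω x - ((c1 + c2) / 2 * I) * ω x ≤ (-((c2 - c1) / 2 * I)) * |ω x| := by
    intro x
    rcases lt_trichotomy (ω x) 0 with h | h | h
    · have b2 := lo x c2 fun y hy => (hneg x y h hy).1
      rw [abs_of_neg h]; nlinarith
    · simp [h]
    · have b1 := up x c1 fun y hy => (hpos x y h hy).2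
      rw [abs_of_pos h]; nlinarith
  have fin := integral_mono (μ := volume.restrict cube)
    (hGω.sub (hωi.const_mul ((c1 + c2) / 2 * I)))
    (hωa.const_mul (-((c2 - c1) / 2 * I))) key
  rw [integral_const_mul] at fin
  have e : ∫ x in cube, ((fun x => G x * ω x) - fun x => (c1 + c2) / 2 * I * ω x) x = 0 := by
    simp only [Pi.sub_apply]
    rw [integral_sub hGω (hωi.const_mul _), integral_const_mul, hω0, H]; simp
  rw [e] at fin
  have : 0 < ((c2 - c1) / 2 * I) * ∫ x in cube, |ω x| := by
    have : 0 < c2 - c1 := by linarith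
    positivity
  linarith

/-- Tensor product of two functions of one variable. -/
def tens (f g : ℝ → ℝ) (x : Pt) : ℝ := f x.1 * g x.2

lemma tens_contDiff {f g : ℝ → ℝ} (hf : ContDiff ℝ (⊤ : ℕ∞) f) (hg : ContDiff ℝ (⊤ : ℕ∞) g) :
    ContDiff ℝ (⊤ : ℕ∞) (tens f g) :=
  (hf.comp contDiff_fst).mul (hg.comp contDiff_snd)

lemma tens_fderiv {f g : ℝ → ℝ} (hf : ContDiff ℝ (⊤ : ℕ∞) f) (hg : ContDiff ℝ (⊤ : ℕ∞) g)
    (x : Pt) : pd1 (fun x => (tens f g x : ℂ)) x = ((deriv f x.1 * g x.2 : ℝ) : ℂ) ∧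
      pd2 (fun x => (tens f g x : ℂ)) x = ((f x.1 * deriv g x.2 : ℝ) : ℂ) := by
  have h1 : HasFDerivAt (fun x : Pt => f x.1) _ x :=
    ((hf.differentiable (by simp)) x.1).hasDerivAt.hasFDerivAt.comp x hasFDerivAt_fst
  have h2 : HasFDerivAt (fun x : Pt => g x.2) _ x :=
    ((hg.differentiable (by simp)) x.2).hasDerivAt.hasFDerivAt.comp x hasFDerivAt_snd
  have h3 : HasFDerivAt (tens f g) _ x := h1.mul h2
  have h4 : HasFDerivAt (fun x => (tens f g x : ℂ)) _ x :=
    Complex.ofRealCLM.hasFDerivAt.comp x h3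
  unfold pd1 pd2
  rw [h4.fderiv]
  constructor
  · simp [mul_comm]
  · simp [mul_comm]

lemma tens_test {W : Set Pt} (hper : PeriodicSet W) {c : Pt} {ρ R : ℝ} (hR : 0 ≤ R)
    (hR' : R ≤ 1 / 2) (hRρ : R < ρ)
    (hb : Metric.ball c ρ ⊆ W) {f g : ℝ → ℝ} (hf : ContDiff ℝ (⊤ : ℕ∞) f)
    (hg : ContDiff ℝ (⊤ : ℕ∞) g) (hfp : ∀ t, ∀ m : ℤ, f (t + m) = f t)
    (hgp : ∀ t, ∀ m : ℤ, g (t + m) = g t)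
    (hf0 : ∀ t, f t ≠ 0 → |sd (t - c.1)| < R) (hg0 : ∀ t, g t ≠ 0 → |sd (t - c.2)| < R) :
    TestFunSp W (fun x => (tens f g x : ℂ)) where
  smooth := Complex.ofRealCLM.contDiff.comp (tens_contDiff hf hg)
  periodic := fun x m => by simp [tens, hfp, hgp]
  supp := by
    refine ⟨{x | Real.cos (2 * Real.pi * R) ≤ Real.cos (2 * Real.pi * (x.1 - c.1))} ∩
      {x | Real.cos (2 * Real.pi * R) ≤ Real.cos (2 * Real.pi * (x.2 - c.2))}, ?_, ?_, ?_⟩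
    · apply IsClosed.inter
      · exact isClosed_le continuous_const (by fun_prop)
      · exact isClosed_le continuous_const (by fun_prop)
    · rintro x ⟨h1, h2⟩
      simp only [Set.mem_ofPred_eq] at h1 h2
      rw [cos_sd (x.1 - c.1), cos_le_iff hR hR' (abs_nonneg _) (sd_abs_le _)] at h1
      rw [cos_sd (x.2 - c.2), cos_le_iff hR hR' (abs_nonneg _) (sd_abs_le _)] at h2
      exact sd_per_near hper hb (h1.trans_lt hRρ) (h2.trans_lt hRρ)
    · intro x hx
      by_contra h
      have h' : f x.1 * g x.2 ≠ 0 := by simpa [tens] using h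
      apply hx
      have a1 := hf0 _ (left_ne_zero_of_mul h')
      have a2 := hg0 _ (right_ne_zero_of_mul h')
      constructor
      · simp only [Set.mem_ofPred_eq]
        rw [cos_sd (x.1 - c.1), cos_le_iff hR hR' (abs_nonneg _) (sd_abs_le _)]
        exact a1.le
      · simp only [Set.mem_ofPred_eq]
        rw [cos_sd (x.2 - c.2), cos_le_iff hR hR' (abs_nonneg _) (sd_abs_le _)]
        exact a2.le

lemma tens_int (f g : ℝ → ℝ) : ∫ x in cube, tens f g x =
    (∫ t in Set.Ioc (0:ℝ) 1, f t) * ∫ t in Set.Ioc (0:ℝ) 1, g t := by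
  unfold cube tens
  rw [← setIntegral_prod_mul]; rfl

lemma tens_abs (f g : ℝ → ℝ) : (fun x => |tens f g x|) = tens (fun t => |f t|) (fun t => |g t|) := by
  ext x; simp [tens, abs_mul]

/-- `x` is `η`-close to `c` modulo the lattice. -/
def Nr (x c : Pt) (η : ℝ) : Prop := ∃ m : ℤ × ℤ, |x.1 - c.1 - m.1| < η ∧ |x.2 - c.2 - m.2| < η

lemma Nr.of_sd {x c : Pt} {η : ℝ} (h1 : |sd (x.1 - c.1)| < η) (h2 : |sd (x.2 - c.2)| < η) :
    Nr x c η := ⟨(round (x.1 - c.1), round (x.2 - c.2)), h1, h2⟩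

lemma Nr.L_near {L : Pt → ℝ}
    (hper : ∀ x : Pt, ∀ m : ℤ × ℤ, L (x.1 + (m.1 : ℝ), x.2 + (m.2 : ℝ)) = L x)
    {x y P c : Pt} {η : ℝ} (hx : Nr x P η) (hy : Nr y c η) :
    ∃ z : Pt, dist z (P.1 - c.1, P.2 - c.2) < 2 * η ∧ L (x.1 - y.1, x.2 - y.2) = L z := by
  obtain ⟨m, h1, h2⟩ := hx
  obtain ⟨n, h3, h4⟩ := hy
  refine ⟨(x.1 - y.1 - (m.1 - n.1), x.2 - y.2 - (m.2 - n.2)), ?_, ?_⟩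
  · rw [Prod.dist_eq, max_lt_iff, Real.dist_eq, Real.dist_eq]
    rw [abs_lt] at h1 h2 h3 h4
    simp only [abs_lt]
    constructor <;> constructor <;> linarith [h1.1, h1.2, h2.1, h2.2, h3.1, h3.2, h4.1, h4.2]
  · have := hper (x.1 - y.1 - (m.1 - n.1), x.2 - y.2 - (m.2 - n.2)) (m - n)
    rw [← this]
    simp

lemma Nr.disj {x P c : Pt} {η : ℝ}
    (hl : ∀ z ∈ latt, ¬ dist z (P.1 - c.1, P.2 - c.2) < 2 * η)
    (hx : Nr x P η) (hy : Nr x c η) : False := by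
  obtain ⟨m, h1, h2⟩ := hx
  obtain ⟨n, h3, h4⟩ := hy
  refine hl (((n - m).1 : ℝ), ((n - m).2 : ℝ)) ⟨n - m, rfl⟩ ?_
  rw [Prod.dist_eq, max_lt_iff, Real.dist_eq, Real.dist_eq]
  rw [abs_lt] at h1 h2 h3 h4
  simp only [Prod.fst_sub, Prod.snd_sub, Int.cast_sub, abs_lt]
  constructor <;> constructor <;> linarith [h1.1, h1.2, h2.1, h2.2, h3.1, h3.2, h4.1, h4.2]

/-- Test functions whose Poisson bracket `ω` is concentrated near `P` and `Q`. -/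
structure Good (W : Set Pt) (x₀ P Q : Pt) (ρ η : ℝ) (f₂ g₂ f g : ℝ → ℝ) (ω : Pt → ℝ) : Prop where
  sf₂ : ContDiff ℝ (⊤ : ℕ∞) f₂
  sg₂ : ContDiff ℝ (⊤ : ℕ∞) g₂
  sf : ContDiff ℝ (⊤ : ℕ∞) f
  sg : ContDiff ℝ (⊤ : ℕ∞) g
  t₂ : TestFunSp W (fun x => (tens f₂ g₂ x : ℂ))
  t : TestFunSp W (fun x => (tens f g x : ℂ))
  ωeq : ∀ x, ω x = deriv f₂ x.1 * g₂ x.2 * (f x.1 * deriv g x.2) -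
    f₂ x.1 * deriv g₂ x.2 * (deriv f x.1 * g x.2)
  ωint : ∫ x in cube, ω x = 0
  ωabs : 0 < ∫ x in cube, |ω x|
  ωpos : ∀ x, 0 < ω x → Nr x P η
  ωneg : ∀ x, ω x < 0 → Nr x Q η
  d1 : ∀ x : Pt, deriv f x.1 * g x.2 ≠ 0 → Nr x x₀ ρ
  d2 : ∀ x : Pt, f x.1 * deriv g x.2 ≠ 0 → Nr x x₀ ρ

lemma Good.cont {W : Set Pt} {x₀ P Q : Pt} {ρ η : ℝ} {f₂ g₂ f g : ℝ → ℝ} {ω : Pt → ℝ}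
    (h : Good W x₀ P Q ρ η f₂ g₂ f g ω) : Continuous ω := by
  have : ω = fun x => deriv f₂ x.1 * g₂ x.2 * (f x.1 * deriv g x.2) -
    f₂ x.1 * deriv g₂ x.2 * (deriv f x.1 * g x.2) := funext h.ωeq
  rw [this]
  have a1 := h.sf₂.continuous
  have a2 := h.sg₂.continuous
  have a3 := h.sf.continuous
  have a4 := h.sg.continuous
  have b1 := h.sf₂.continuous_deriv (by simp)
  have b2 := h.sg₂.continuous_deriv (by simp)
  have b3 := h.sf.continuous_deriv (by simp)
  have b4 := h.sg.continuous_deriv (by simp)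
  fun_prop

lemma main_eq (W : Set Pt) (hper : PeriodicSet W) (L : Pt → ℝ)
    (hLper : ∀ x : Pt, ∀ m : ℤ × ℤ, L (x.1 + (m.1 : ℝ), x.2 + (m.2 : ℝ)) = L x)
    (hLint : IntegrableOn L cube)
    (hLc : ∀ x, x ∉ latt → ContinuousAt L x)
    (hid : ∀ φ₁ φ₂ φ : Pt → ℂ, TestFunSp W φ₁ → TestFunSp W φ₂ → TestFunSp W φ →
      (∫ x in cube,
        (conv L φ₁ x *
            (-(pd2 φ₂ x) * pd1 φ x + pd1 φ₂ x * pd2 φ x) +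
          conv L φ₂ x *
            (-(pd2 φ₁ x) * pd1 φ x + pd1 φ₁ x * pd2 φ x))) = 0)
    (x₀ y₀ P Q : Pt) (ρ : ℝ) (hρ : 0 < ρ) (hρ' : ρ ≤ 1 / 2)
    (hy : Metric.ball y₀ ρ ⊆ W)
    (hl : ∀ z ∈ latt, ¬ dist z (x₀.1 - y₀.1, x₀.2 - y₀.2) < 2 * ρ)
    (hP : ((P.1 - y₀.1, P.2 - y₀.2) : Pt) ∉ latt) (hQ : ((Q.1 - y₀.1, Q.2 - y₀.2) : Pt) ∉ latt)
    (η₀ : ℝ) (hη₀ : 0 < η₀)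
    (H : ∀ η, 0 < η → η < η₀ → ∃ f₂ g₂ f g ω, Good W x₀ P Q ρ η f₂ g₂ f g ω) :
    L (P.1 - y₀.1, P.2 - y₀.2) = L (Q.1 - y₀.1, Q.2 - y₀.2) := by
  by_contra hne
  set p : Pt := (P.1 - y₀.1, P.2 - y₀.2) with hp
  set q : Pt := (Q.1 - y₀.1, Q.2 - y₀.2) with hq
  have hε : 0 < |L p - L q| / 3 := by
    have := abs_pos.2 (sub_ne_zero.2 hne); positivity
  set ε := |L p - L q| / 3 with hεd
  obtain ⟨e1, he1, hp1⟩ := Metric.continuousAt_iff.1 (hLc p hP) ε hε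
  obtain ⟨e2, he2, hq1⟩ := Metric.continuousAt_iff.1 (hLc q hQ) ε hε
  obtain ⟨η, hη, hηm⟩ : ∃ η, 0 < η ∧ η < min (min (e1 / 2) (e2 / 2)) (min ρ η₀) :=
    exists_between (by positivity)
  have hη1 : η < e1 / 2 := hηm.trans_le ((min_le_left _ _).trans (min_le_left _ _))
  have hη2 : η < e2 / 2 := hηm.trans_le ((min_le_left _ _).trans (min_le_right _ _))
  have hη3 : η < ρ := hηm.trans_le ((min_le_right _ _).trans (min_le_left _ _))
  have hη4 : η < η₀ := hηm.trans_le ((min_le_right _ _).trans (min_le_right _ _))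
  obtain ⟨f₂, g₂, f, g, ω, hg⟩ := H η hη hη4
  have k1 : 0 ≤ η / 2 := by linarith
  have k2 : η / 2 < η := by linarith
  have k3 : η ≤ 1 / 2 := by linarith
  set u₁ := plat y₀.1 (η / 2) η with hu₁
  set u₂ := plat y₀.2 (η / 2) η with hu₂
  have su₁ : ContDiff ℝ (⊤ : ℕ∞) u₁ := plat_contDiff
  have su₂ : ContDiff ℝ (⊤ : ℕ∞) u₂ := plat_contDiff
  set u := tens u₁ u₂ with hu
  have ut : TestFunSp W (fun x => (u x : ℂ)) :=
    tens_test hper hη.le k3 hη3 hy su₁ su₂ plat_per plat_per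
      (fun t => (plat_ne_zero k1 k2 k3).1) (fun t => (plat_ne_zero k1 k2 k3).1)
  have ucont : Continuous u := (tens_contDiff su₁ su₂).continuous
  have unr : ∀ y, u y ≠ 0 → Nr y y₀ η := fun y hy =>
    Nr.of_sd ((plat_ne_zero k1 k2 k3).1 (left_ne_zero_of_mul hy))
      ((plat_ne_zero k1 k2 k3).1 (right_ne_zero_of_mul hy))
  have Nmono : ∀ {x c : Pt}, Nr x c η → Nr x c ρ := by
    rintro x c ⟨m, h1, h2⟩
    exact ⟨m, h1.trans hη3, h2.trans hη3⟩
  have ud1 : ∀ y : Pt, deriv u₁ y.1 * u₂ y.2 ≠ 0 → Nr y y₀ ρ := fun y hy =>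
    Nmono (Nr.of_sd (plat_deriv_ne k1 k2 k3 (left_ne_zero_of_mul hy)).2
      ((plat_ne_zero k1 k2 k3).1 (right_ne_zero_of_mul hy)))
  have ud2 : ∀ y : Pt, u₁ y.1 * deriv u₂ y.2 ≠ 0 → Nr y y₀ ρ := fun y hy =>
    Nmono (Nr.of_sd ((plat_ne_zero k1 k2 k3).1 (left_ne_zero_of_mul hy))
      (plat_deriv_ne k1 k2 k3 (right_ne_zero_of_mul hy)).2)
  have hz : ∀ a b : ℝ, ∀ x : Pt, (a ≠ 0 → Nr x x₀ ρ) → (b ≠ 0 → Nr x y₀ ρ) → b * a = 0 := by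
    intro a b x h1 h2
    by_contra hc
    exact Nr.disj hl (h1 (right_ne_zero_of_mul hc)) (h2 (left_ne_zero_of_mul hc))
  have hid0 := hid _ _ _ ut hg.t₂ hg.t
  have hreal : ∫ x in cube, (∫ y in cube, L (x.1 - y.1, x.2 - y.2) * u y) * ω x = 0 := by
    rw [← Complex.ofReal_inj, Complex.ofReal_zero, ← hid0, ← integral_complex_ofReal]
    congr 1
    ext x
    rw [(tens_fderiv hg.sf hg.sg x).1, (tens_fderiv hg.sf hg.sg x).2,
      (tens_fderiv hg.sf₂ hg.sg₂ x).1, (tens_fderiv hg.sf₂ hg.sg₂ x).2,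
      (tens_fderiv su₁ su₂ x).1, (tens_fderiv su₁ su₂ x).2]
    have z1 := hz _ _ x (hg.d1 x) (ud2 x)
    have z2 := hz _ _ x (hg.d2 x) (ud1 x)
    have hc : conv L (fun x => (u x : ℂ)) x =
        ((∫ y in cube, L (x.1 - y.1, x.2 - y.2) * u y : ℝ) : ℂ) := by
      rw [conv, ← integral_complex_ofReal]
      simp
    rw [hc, neg_mul, neg_mul, ← Complex.ofReal_mul (u₁ x.1 * _), z1,
      ← Complex.ofReal_mul (_ * u₂ x.2), z2, hg.ωeq]
    push_cast
    ring
  have uI : 0 < ∫ y in cube, u y := by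
    rw [hu, tens_int]
    have h0 : ∀ c : ℝ, plat c (η / 2) η c ≠ 0 := fun c => by
      rw [plat_ne_zero k1 k2 k3]; simpa [sd] using hη
    exact mul_pos (int_pos _ su₁.continuous plat_per plat_nonneg _ (h0 _))
      (int_pos _ su₂.continuous plat_per plat_nonneg _ (h0 _))
  have u0 : ∀ y, 0 ≤ u y := fun y => mul_nonneg (plat_nonneg _) (plat_nonneg _)
  have u1 : ∀ y, u y ≤ 1 := fun y => mul_le_one₀ (plat_le_one _) (plat_nonneg _) (plat_le_one _)
  have bP : ∀ x y : Pt, 0 < ω x → u y ≠ 0 → |L (x.1 - y.1, x.2 - y.2) - L p| < ε := by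
    intro x y h1 h2
    obtain ⟨z, hz1, hz2⟩ := Nr.L_near hLper (hg.ωpos x h1) (unr y h2)
    rw [hz2, ← Real.dist_eq]
    exact hp1 (hz1.trans (by linarith))
  have bQ : ∀ x y : Pt, ω x < 0 → u y ≠ 0 → |L (x.1 - y.1, x.2 - y.2) - L q| < ε := by
    intro x y h1 h2
    obtain ⟨z, hz1, hz2⟩ := Nr.L_near hLper (hg.ωneg x h1) (unr y h2)
    rw [hz2, ← Real.dist_eq]
    exact hq1 (hz1.trans (by linarith))
  have Lm := meas_of_smooth L hLc
  have Li := K_int L hLper hLint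
  have m1 := neg_abs_le (L p)
  have m2 := le_abs_self (L p)
  have m3 := neg_abs_le (L q)
  have m4 := le_abs_self (L q)
  have m5 := abs_nonneg (L p)
  have m6 := abs_nonneg (L q)
  rcases lt_or_gt_of_ne hne with hlt | hlt
  · have he : ε = (L q - L p) / 3 := by rw [hεd, abs_of_neg (by linarith)]; ring
    refine sign_lemma L Lm Li u ω ucont hg.cont u0 u1 uI hg.ωint hg.ωabs (L p + ε) (L q - ε)
      (|L p| + |L q| + ε) (by linarith) ?_ ?_ hreal
    · intro x y h1 h2
      have := abs_lt.1 (bP x y h1 h2)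
      constructor <;> linarith [this.1, this.2]
    · intro x y h1 h2
      have := abs_lt.1 (bQ x y h1 h2)
      constructor <;> linarith [this.1, this.2]
  · have he : ε = (L p - L q) / 3 := by rw [hεd, abs_of_pos (by linarith)]
    refine sign_lemma L Lm Li u (fun x => - ω x) ucont hg.cont.neg u0 u1 uI ?_ ?_
      (L q + ε) (L p - ε)
      (|L p| + |L q| + ε) (by linarith) ?_ ?_ ?_
    · rw [integral_neg, hg.ωint, neg_zero]
    · simpa using hg.ωabs
    · intro x y h1 h2
      have := abs_lt.1 (bQ x y (by linarith) h2)
      constructor <;> linarith [this.1, this.2]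
    · intro x y h1 h2
      have := abs_lt.1 (bP x y (by linarith) h2)
      constructor <;> linarith [this.1, this.2]
    · simp only [mul_neg]
      rw [integral_neg, hreal, neg_zero]

/-- Localized sine. -/
noncomputable def afun (s ρ t : ℝ) : ℝ :=
  Real.sin (2 * Real.pi * (t - s)) * plat s (ρ / 2) (3 * ρ / 4) t

/-- Localized nonnegative weight. -/
noncomputable def wfun (s η t : ℝ) : ℝ :=
  2 * Real.pi * Real.cos (2 * Real.pi * (t - s)) * plat s (η / 2) η t

section oned
variable {s ρ η h : ℝ}

lemma afun_contDiff : ContDiff ℝ (⊤ : ℕ∞) (afun s ρ) := by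
  unfold afun
  apply ContDiff.mul _ plat_contDiff
  apply Real.contDiff_sin.comp
  fun_prop

lemma wfun_cont : Continuous (wfun s η) := by
  unfold wfun
  have := (plat_contDiff (a := s) (r := η / 2) (R := η)).continuous
  fun_prop

lemma afun_per (t : ℝ) (m : ℤ) : afun s ρ (t + m) = afun s ρ t := by
  unfold afun
  rw [plat_per, show 2 * Real.pi * (t + m - s) = 2 * Real.pi * (t - s) + m * (2 * Real.pi) by ring,
    Real.sin_add_int_mul_two_pi]

lemma wfun_per (t : ℝ) (m : ℤ) : wfun s η (t + m) = wfun s η t := by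
  unfold wfun
  rw [plat_per, show 2 * Real.pi * (t + m - s) = 2 * Real.pi * (t - s) + m * (2 * Real.pi) by ring,
    Real.cos_add_int_mul_two_pi]

lemma afun_deriv (hρ : 0 < ρ) (hρ' : ρ ≤ 1 / 2) (hη : 0 < η) (hηρ : η ≤ ρ / 2) (t : ℝ) :
    deriv (afun s ρ) t * plat s (η / 2) η t = wfun s η t := by
  by_cases hd : plat s (η / 2) η t = 0
  · simp [wfun, hd]
  have h1 := (plat_ne_zero (by linarith) (by linarith) (by linarith)).1 hd
  have h2 : plat s (ρ / 2) (3 * ρ / 4) t = 1 :=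
    (plat_eq_one (by linarith) (by linarith) (by linarith)).2 (by linarith)
  have h3 := plat_deriv_of_one h2
  have h4 : HasDerivAt (plat s (ρ / 2) (3 * ρ / 4)) _ t :=
    ((plat_contDiff (a := s) (r := ρ / 2) (R := 3 * ρ / 4)).differentiable (by simp) t).hasDerivAt
  have h5 : HasDerivAt (fun t => Real.sin (2 * Real.pi * (t - s)))
      (Real.cos (2 * Real.pi * (t - s)) * (2 * Real.pi * 1)) t := by
    apply HasDerivAt.sin
    exact ((hasDerivAt_id t).sub_const s).const_mul _
  have h6 : HasDerivAt (afun s ρ) _ t := h5.mul h4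
  rw [h6.deriv, h3, h2, wfun]
  ring

lemma wfun_nonneg (hη : 0 < η) (hη' : η ≤ 1 / 4) (t : ℝ) : 0 ≤ wfun s η t := by
  by_cases hd : plat s (η / 2) η t = 0
  · simp [wfun, hd]
  have h1 := (plat_ne_zero (by linarith) (by linarith) (by linarith)).1 hd
  have h2 := (cos_lt_iff (x := 1 / 4) (y := |sd (t - s)|) (by norm_num) (by norm_num)
    (abs_nonneg _) (sd_abs_le _)).2 (by linarith)
  rw [← cos_sd, show 2 * Real.pi * (1 / 4) = Real.pi / 2 by ring, Real.cos_pi_div_two] at h2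
  have := Real.pi_pos
  have := plat_nonneg (a := s) (r := η / 2) (R := η) t
  unfold wfun
  positivity

lemma wfun_ne (hη : 0 < η) (hη' : η ≤ 1 / 4) : wfun s η s ≠ 0 := by
  have : plat s (η / 2) η s = 1 :=
    (plat_eq_one (by linarith) (by linarith) (by linarith)).2 (by simp [sd]; linarith)
  simp [wfun, this, Real.pi_ne_zero]

lemma wfun_supp (hη : 0 < η) (hη' : η ≤ 1 / 4) {t : ℝ} (hw : wfun s η t ≠ 0) :
    |sd (t - s)| < η :=
  (plat_ne_zero (by linarith) (by linarith) (by linarith)).1 (right_ne_zero_of_mul hw)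

lemma cb (hρ : 0 < ρ) (hρ' : ρ ≤ 1 / 2) (hη : 0 < η) (hηh : η < h) (hh : h < ρ / 4) (t : ℝ) :
    plat s (ρ / 2) (3 * ρ / 4) t * deriv (plat s (h - η) (h + η)) t =
      deriv (plat s (h - η) (h + η)) t := by
  by_cases hd : deriv (plat s (h - η) (h + η)) t = 0
  · simp [hd]
  have := (plat_deriv_ne (by linarith) (by linarith) (by linarith) hd).2
  rw [(plat_eq_one (by linarith) (by linarith) (by linarith)).2 (by linarith), one_mul]

lemma cb' (hρ : 0 < ρ) (hρ' : ρ ≤ 1 / 2) (hη : 0 < η) (hηh : η < h) (hh : h < ρ / 4) (t : ℝ) :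
    deriv (plat s (ρ / 2) (3 * ρ / 4)) t * plat s (h - η) (h + η) t = 0 := by
  by_cases hd : plat s (h - η) (h + η) t = 0
  · simp [hd]
  have := (plat_ne_zero (by linarith) (by linarith) (by linarith)).1 hd
  rw [plat_deriv_of_one
    ((plat_eq_one (by linarith) (by linarith) (by linarith)).2 (by linarith)), zero_mul]

lemma b_deriv_ne (hη : 0 < η) (hηh : η < h) (hh : h < 1 / 8) :
    ∃ t, deriv (plat s (h - η) (h + η)) t ≠ 0 := by
  by_contra hc
  push Not at hc
  have := is_const_of_deriv_eq_zero ((plat_contDiff (a := s)).differentiable (by simp)) hc s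
    (s + 2⁻¹)
  have h1 : plat s (h - η) (h + η) s = 1 :=
    (plat_eq_one (by linarith) (by linarith) (by linarith)).2 (by simp [sd]; linarith)
  have h2 := (plat_ne_zero (a := s) (r := h - η) (R := h + η) (t := s + 2⁻¹)
    (by linarith) (by linarith) (by linarith)).1 (by rw [← this, h1]; norm_num)
  rw [add_sub_cancel_left, sd, round_two_inv] at h2
  norm_num [abs_lt] at h2
  linarith

lemma b_abs_int (hη : 0 < η) (hηh : η < h) (hh : h < 1 / 8) :
    0 < ∫ t in Set.Ioc (0:ℝ) 1, |deriv (plat s (h - η) (h + η)) t| := by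
  obtain ⟨t, ht⟩ := b_deriv_ne (s := s) hη hηh hh
  refine int_pos _ ((plat_contDiff).continuous_deriv (by simp)).abs (fun t m => ?_)
    (fun t => abs_nonneg _) t (abs_ne_zero.2 ht)
  rw [deriv_per _ plat_per]

lemma w_abs_int (hη : 0 < η) (hη' : η ≤ 1 / 4) :
    0 < ∫ t in Set.Ioc (0:ℝ) 1, |wfun s η t| :=
  int_pos _ wfun_cont.abs (fun t m => by rw [wfun_per]) (fun t => abs_nonneg _) s
    (abs_ne_zero.2 (wfun_ne hη hη'))

lemma afun_supp (hρ : 0 < ρ) (hρ' : ρ ≤ 1 / 2) {t : ℝ} (ha : afun s ρ t ≠ 0) :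
    |sd (t - s)| < 3 * ρ / 4 :=
  (plat_ne_zero (by linarith) (by linarith) (by linarith)).1 (right_ne_zero_of_mul ha)

end oned

lemma good2 {W : Set Pt} (hper : PeriodicSet W) (x₀ : Pt) {ρ h η : ℝ} (hρ : 0 < ρ)
    (hρ' : ρ ≤ 1 / 2) (hb : Metric.ball x₀ ρ ⊆ W) (hh : h < ρ / 4) (hη : 0 < η) (hηh : η < h) :
    Good W x₀ (x₀.1, x₀.2 - h) (x₀.1, x₀.2 + h) ρ η (afun x₀.1 ρ)
      (plat x₀.2 (ρ / 2) (3 * ρ / 4)) (plat x₀.1 (η / 2) η) (plat x₀.2 (h - η) (h + η))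
      (tens (wfun x₀.1 η) (deriv (plat x₀.2 (h - η) (h + η)))) where
  sf₂ := afun_contDiff
  sg₂ := plat_contDiff
  sf := plat_contDiff
  sg := plat_contDiff
  t₂ := tens_test hper (R := 3 * ρ / 4) (by linarith) (by linarith) (by linarith) hb
    afun_contDiff plat_contDiff afun_per plat_per (fun t ht => afun_supp hρ hρ' ht)
    (fun t ht => (plat_ne_zero (by linarith) (by linarith) (by linarith)).1 ht)
  t := tens_test hper (R := 3 * ρ / 4) (by linarith) (by linarith) (by linarith) hb
    plat_contDiff plat_contDiff plat_per plat_per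
    (fun t ht => ((plat_ne_zero (by linarith) (by linarith) (by linarith)).1 ht).trans
      (by linarith))
    (fun t ht => ((plat_ne_zero (by linarith) (by linarith) (by linarith)).1 ht).trans
      (by linarith))
  ωeq := fun x => by
    have e1 := afun_deriv (s := x₀.1) hρ hρ' hη (by linarith) x.1
    have e2 := cb (s := x₀.2) hρ hρ' hη hηh hh x.2
    have e3 := cb' (s := x₀.2) hρ hρ' hη hηh hh x.2
    unfold tens
    linear_combination (-(plat x₀.2 (ρ / 2) (3 * ρ / 4) x.2 *
      deriv (plat x₀.2 (h - η) (h + η)) x.2)) * e1 - wfun x₀.1 η x.1 * e2 +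
      (afun x₀.1 ρ x.1 * deriv (plat x₀.1 (η / 2) η) x.1) * e3
  ωint := by rw [tens_int, int_deriv_zero _ plat_contDiff plat_per, mul_zero]
  ωabs := by
    rw [tens_abs, tens_int]
    exact mul_pos (w_abs_int hη (by linarith)) (b_abs_int hη hηh (by linarith))
  ωpos := fun x hx => by
    have w0 := wfun_nonneg (s := x₀.1) hη (by linarith) x.1
    have h1 := pos_of_mul_pos_right hx w0
    have h2 := wfun_supp hη (by linarith) (left_ne_zero_of_mul hx.ne')
    have h3 := plat_deriv_pos (by linarith) (by linarith) (by linarith) h1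
    refine ⟨(round (x.1 - x₀.1), round (x.2 - x₀.2)), h2, ?_⟩
    unfold sd at h3
    rw [abs_lt]
    constructor <;> linarith [h3.1, h3.2]
  ωneg := fun x hx => by
    have w0 := wfun_nonneg (s := x₀.1) hη (by linarith) x.1
    have h1 : deriv (plat x₀.2 (h - η) (h + η)) x.2 < 0 := by
      by_contra hc
      have := mul_nonneg w0 (not_lt.1 hc)
      unfold tens at hx
      linarith
    have h2 := wfun_supp hη (by linarith) (left_ne_zero_of_mul hx.ne)
    have h3 := plat_deriv_neg (by linarith) (by linarith) (by linarith) h1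
    refine ⟨(round (x.1 - x₀.1), round (x.2 - x₀.2)), h2, ?_⟩
    unfold sd at h3
    rw [abs_lt]
    constructor <;> linarith [h3.1, h3.2]
  d1 := fun x hx => Nr.of_sd
    ((plat_deriv_ne (by linarith) (by linarith) (by linarith) (left_ne_zero_of_mul hx)).2.trans
      (by linarith))
    (((plat_ne_zero (by linarith) (by linarith) (by linarith)).1 (right_ne_zero_of_mul hx)).trans
      (by linarith))
  d2 := fun x hx => Nr.of_sd
    (((plat_ne_zero (by linarith) (by linarith) (by linarith)).1 (left_ne_zero_of_mul hx)).trans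
      (by linarith))
    ((plat_deriv_ne (by linarith) (by linarith) (by linarith) (right_ne_zero_of_mul hx)).2.trans
      (by linarith))

lemma good1 {W : Set Pt} (hper : PeriodicSet W) (x₀ : Pt) {ρ h η : ℝ} (hρ : 0 < ρ)
    (hρ' : ρ ≤ 1 / 2) (hb : Metric.ball x₀ ρ ⊆ W) (hh : h < ρ / 4) (hη : 0 < η) (hηh : η < h) :
    Good W x₀ (x₀.1 + h, x₀.2) (x₀.1 - h, x₀.2) ρ η (plat x₀.1 (ρ / 2) (3 * ρ / 4))
      (afun x₀.2 ρ) (plat x₀.1 (h - η) (h + η)) (plat x₀.2 (η / 2) η)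
      (fun x => - tens (deriv (plat x₀.1 (h - η) (h + η))) (wfun x₀.2 η) x) where
  sf₂ := plat_contDiff
  sg₂ := afun_contDiff
  sf := plat_contDiff
  sg := plat_contDiff
  t₂ := tens_test hper (R := 3 * ρ / 4) (by linarith) (by linarith) (by linarith) hb
    plat_contDiff afun_contDiff plat_per afun_per
    (fun t ht => (plat_ne_zero (by linarith) (by linarith) (by linarith)).1 ht)
    (fun t ht => afun_supp hρ hρ' ht)
  t := tens_test hper (R := 3 * ρ / 4) (by linarith) (by linarith) (by linarith) hb
    plat_contDiff plat_contDiff plat_per plat_per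
    (fun t ht => ((plat_ne_zero (by linarith) (by linarith) (by linarith)).1 ht).trans
      (by linarith))
    (fun t ht => ((plat_ne_zero (by linarith) (by linarith) (by linarith)).1 ht).trans
      (by linarith))
  ωeq := fun x => by
    have e1 := afun_deriv (s := x₀.2) hρ hρ' hη (by linarith) x.2
    have e2 := cb (s := x₀.1) hρ hρ' hη hηh hh x.1
    have e3 := cb' (s := x₀.1) hρ hρ' hη hηh hh x.1
    unfold tens
    linear_combination (plat x₀.1 (ρ / 2) (3 * ρ / 4) x.1 *
      deriv (plat x₀.1 (h - η) (h + η)) x.1) * e1 + wfun x₀.2 η x.2 * e2 -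
      (afun x₀.2 ρ x.2 * deriv (plat x₀.2 (η / 2) η) x.2) * e3
  ωint := by rw [integral_neg, tens_int, int_deriv_zero _ plat_contDiff plat_per, zero_mul, neg_zero]
  ωabs := by
    simp only [abs_neg]
    rw [tens_abs, tens_int]
    exact mul_pos (b_abs_int hη hηh (by linarith)) (w_abs_int hη (by linarith))
  ωpos := fun x hx => by
    have hx' : tens (deriv (plat x₀.1 (h - η) (h + η))) (wfun x₀.2 η) x < 0 := by linarith
    have w0 := wfun_nonneg (s := x₀.2) hη (by linarith) x.2
    have h1 : deriv (plat x₀.1 (h - η) (h + η)) x.1 < 0 := by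
      by_contra hc
      have := mul_nonneg (not_lt.1 hc) w0
      unfold tens at hx'
      linarith
    have h2 := wfun_supp hη (by linarith) (right_ne_zero_of_mul hx'.ne)
    have h3 := plat_deriv_neg (by linarith) (by linarith) (by linarith) h1
    refine ⟨(round (x.1 - x₀.1), round (x.2 - x₀.2)), ?_, h2⟩
    unfold sd at h3
    rw [abs_lt]
    constructor <;> linarith [h3.1, h3.2]
  ωneg := fun x hx => by
    have hx' : 0 < tens (deriv (plat x₀.1 (h - η) (h + η))) (wfun x₀.2 η) x := by linarith
    have w0 := wfun_nonneg (s := x₀.2) hη (by linarith) x.2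
    have h1 := pos_of_mul_pos_left hx' w0
    have h2 := wfun_supp hη (by linarith) (right_ne_zero_of_mul hx'.ne')
    have h3 := plat_deriv_pos (by linarith) (by linarith) (by linarith) h1
    refine ⟨(round (x.1 - x₀.1), round (x.2 - x₀.2)), ?_, h2⟩
    unfold sd at h3
    rw [abs_lt]
    constructor <;> linarith [h3.1, h3.2]
  d1 := fun x hx => Nr.of_sd
    ((plat_deriv_ne (by linarith) (by linarith) (by linarith) (left_ne_zero_of_mul hx)).2.trans
      (by linarith))
    (((plat_ne_zero (by linarith) (by linarith) (by linarith)).1 (right_ne_zero_of_mul hx)).trans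
      (by linarith))
  d2 := fun x hx => Nr.of_sd
    (((plat_ne_zero (by linarith) (by linarith) (by linarith)).1 (left_ne_zero_of_mul hx)).trans
      (by linarith))
    ((plat_deriv_ne (by linarith) (by linarith) (by linarith) (right_ne_zero_of_mul hx)).2.trans
      (by linarith))

lemma sym_fderiv (L : Pt → ℝ) (z e : Pt) (hL : DifferentiableAt ℝ L z) (δ : ℝ) (hδ : 0 < δ)
    (h : ∀ t, 0 < t → t < δ → L (z + t • e) = L (z - t • e)) : fderiv ℝ L z e = 0 := by
  have h1 : HasDerivAt (fun t : ℝ => L (z + t • e)) (fderiv ℝ L z e) 0 := by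
    have hg : HasDerivAt (fun t : ℝ => z + t • e) ((1:ℝ) • e) 0 :=
      ((hasDerivAt_id (0:ℝ)).smul_const e).const_add z
    have hL' : HasFDerivAt L (fderiv ℝ L z) (z + (0:ℝ) • e) := by
      simpa using hL.hasFDerivAt
    have hc := hL'.comp_hasDerivAt (0:ℝ) hg
    rw [one_smul] at hc
    exact hc
  have h2 : HasDerivAt (fun t : ℝ => L (z - t • e)) (-(fderiv ℝ L z e)) 0 := by
    have hg : HasDerivAt (fun t : ℝ => z - t • e) (-((1:ℝ) • e)) 0 :=
      ((hasDerivAt_id (0:ℝ)).smul_const e).const_sub z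
    have hL' : HasFDerivAt L (fderiv ℝ L z) (z - (0:ℝ) • e) := by
      simpa using hL.hasFDerivAt
    have hc := hL'.comp_hasDerivAt (0:ℝ) hg
    rw [one_smul, map_neg] at hc
    exact hc
  have h3 : (fun t : ℝ => L (z + t • e)) =ᶠ[nhds 0] fun t : ℝ => L (z - t • e) := by
    filter_upwards [Metric.ball_mem_nhds (0:ℝ) hδ] with t ht
    rw [Metric.mem_ball, dist_zero_right, Real.norm_eq_abs, abs_lt] at ht
    rcases lt_trichotomy t 0 with h0 | h0 | h0
    · have := h (-t) (by linarith) (by linarith)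
      simp only [neg_smul, sub_neg_eq_add] at this
      rw [← this, sub_eq_add_neg]
    · simp [h0]
    · exact h t h0 ht.2
  have := h1.unique (h2.congr_of_eventuallyEq h3)
  linarith

lemma part_one (W : Set Pt) (hO : IsOpen W) (hper : PeriodicSet W) (L : Pt → ℝ)
    (hLper : ∀ x : Pt, ∀ m : ℤ × ℤ, L (x.1 + (m.1 : ℝ), x.2 + (m.2 : ℝ)) = L x)
    (hLint : IntegrableOn L cube)
    (hLd : ∀ x, x ∉ latt → DifferentiableAt ℝ L x)
    (hid : ∀ φ₁ φ₂ φ : Pt → ℂ, TestFunSp W φ₁ → TestFunSp W φ₂ → TestFunSp W φ →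
      (∫ x in cube,
        (conv L φ₁ x *
            (-(pd2 φ₂ x) * pd1 φ x + pd1 φ₂ x * pd2 φ x) +
          conv L φ₂ x *
            (-(pd2 φ₁ x) * pd1 φ x + pd1 φ₁ x * pd2 φ x))) = 0)
    (x : Pt) (hx : x ∈ W) (y : Pt) (hy : y ∈ W) (hz : ((x.1 - y.1, x.2 - y.2) : Pt) ∉ latt) :
    fderiv ℝ L (x.1 - y.1, x.2 - y.2) (1, 0) = 0 ∧
      fderiv ℝ L (x.1 - y.1, x.2 - y.2) (0, 1) = 0 := by
  obtain ⟨r1, hr1, hb1⟩ := Metric.isOpen_iff.1 hO x hx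
  obtain ⟨r2, hr2, hb2⟩ := Metric.isOpen_iff.1 hO y hy
  obtain ⟨r3, hr3, hb3⟩ := Metric.isOpen_iff.1 latt_closed.isOpen_compl _ hz
  obtain ⟨ρ, hρ, hρm⟩ : ∃ ρ, 0 < ρ ∧ ρ < min (min r1 r2) (min (r3 / 2) (1 / 2)) :=
    exists_between (by positivity)
  have h1 : ρ < r1 := hρm.trans_le ((min_le_left _ _).trans (min_le_left _ _))
  have h2 : ρ < r2 := hρm.trans_le ((min_le_left _ _).trans (min_le_right _ _))
  have h3 : ρ < r3 / 2 := hρm.trans_le ((min_le_right _ _).trans (min_le_left _ _))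
  have h4 : ρ < 1 / 2 := hρm.trans_le ((min_le_right _ _).trans (min_le_right _ _))
  have bx : Metric.ball x ρ ⊆ W := (Metric.ball_subset_ball h1.le).trans hb1
  have bY : Metric.ball y ρ ⊆ W := (Metric.ball_subset_ball h2.le).trans hb2
  have hl : ∀ z ∈ latt, ¬ dist z (x.1 - y.1, x.2 - y.2) < 2 * ρ :=
    fun z hzl hd => hb3 (show dist z _ < r3 by linarith) hzl
  have hnl : ∀ z : Pt, dist z (x.1 - y.1, x.2 - y.2) < 2 * ρ → z ∉ latt :=
    fun z hd hzl => hl z hzl hd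
  have hLc : ∀ x, x ∉ latt → ContinuousAt L x := fun x hx => (hLd x hx).continuousAt
  constructor
  · refine sym_fderiv L _ _ (hLd _ hz) (ρ / 4) (by linarith) fun h h0 hh => ?_
    have := main_eq W hper L hLper hLint hLc hid x y (x.1 + h, x.2) (x.1 - h, x.2) ρ hρ h4.le bY hl
      (hnl _ ?_) (hnl _ ?_) h h0
      (fun η hη hηh => ⟨_, _, _, _, _, good1 hper x hρ h4.le bx hh hη hηh⟩)
    · convert this using 2
      · ext <;> simp; ring
      · ext <;> simp; ring
    · rw [Prod.dist_eq, max_lt_iff, Real.dist_eq, Real.dist_eq]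
      simp only [abs_lt]
      constructor <;> constructor <;> linarith
    · rw [Prod.dist_eq, max_lt_iff, Real.dist_eq, Real.dist_eq]
      simp only [abs_lt]
      constructor <;> constructor <;> linarith
  · refine sym_fderiv L _ _ (hLd _ hz) (ρ / 4) (by linarith) fun h h0 hh => ?_
    have := main_eq W hper L hLper hLint hLc hid x y (x.1, x.2 - h) (x.1, x.2 + h) ρ hρ h4.le bY hl
      (hnl _ ?_) (hnl _ ?_) h h0
      (fun η hη hηh => ⟨_, _, _, _, _, good2 hper x hρ h4.le bx hh hη hηh⟩)
    · convert this.symm using 2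
      · ext <;> simp; ring
      · ext <;> simp; ring
    · rw [Prod.dist_eq, max_lt_iff, Real.dist_eq, Real.dist_eq]
      simp only [abs_lt]
      constructor <;> constructor <;> linarith
    · rw [Prod.dist_eq, max_lt_iff, Real.dist_eq, Real.dist_eq]
      simp only [abs_lt]
      constructor <;> constructor <;> linarith

lemma part_two (W : Set Pt) (hO : IsOpen W) (L : Pt → ℝ)
    (hLd : ∀ x, x ∉ latt → DifferentiableAt ℝ L x)
    (h : ∀ x ∈ W, ∀ y ∈ W, ((x.1 - y.1, x.2 - y.2) : Pt) ∉ latt →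
      fderiv ℝ L (x.1 - y.1, x.2 - y.2) (1, 0) = 0 ∧
      fderiv ℝ L (x.1 - y.1, x.2 - y.2) (0, 1) = 0)
    (g : Pt → ℂ) (hg : TestFunSp W g) (x : Pt) (hx : x ∈ W) :
    ∀ᶠ x' in nhds x, conv L g x' = conv L g x := by
  obtain ⟨r, hr, hb⟩ := Metric.isOpen_iff.1 hO x hx
  obtain ⟨F, -, hFW, hF⟩ := hg.supp
  have key : ∀ y ∈ W, ∀ p ∈ Metric.ball (x - y) r \ latt, ∀ q ∈ Metric.ball (x - y) r \ latt,
      L p = L q := by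
    intro y hy p hp q hq
    refine (Metric.isOpen_ball.sdiff latt_closed).is_const_of_fderiv_eq_zero (𝕜 := ℝ)
      (ball_diff_connected (x - y) r hr latt latt_countable) (fun z hz =>
      (hLd z hz.2).differentiableWithinAt) (fun z hz => ?_) hp hq
    have hzW : z + y ∈ W := by
      apply hb
      have := hz.1
      rw [Metric.mem_ball, dist_eq_norm] at this ⊢
      convert this using 2
      abel
    have e : (((z + y).1 - y.1, (z + y).2 - y.2) : Pt) = z := by ext <;> simp
    have := h _ hzW y hy (by rw [e]; exact hz.2)
    rw [e] at this
    ext v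
    · simpa using this.1
    · simpa using this.2
  have nul : ∀ w : Pt, ∀ᵐ y : Pt, w - y ∉ latt := by
    intro w
    have : ((fun y : Pt => w - y) ⁻¹' latt).Countable :=
      latt_countable.preimage (sub_right_injective)
    exact this.ae_notMem volume
  filter_upwards [Metric.ball_mem_nhds x hr] with x' hx'
  unfold conv
  refine setIntegral_congr_ae cube_meas ?_
  filter_upwards [nul x, nul x'] with y h1 h2 _
  by_cases hy : y ∈ F
  · have := key y (hFW hy) (x' - y) ⟨?_, h2⟩ (x - y) ⟨Metric.mem_ball_self hr, h1⟩
    · have e : L (x'.1 - y.1, x'.2 - y.2) = L (x.1 - y.1, x.2 - y.2) := this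
      rw [e]
    · simpa [Metric.mem_ball] using hx'
  · simp [hF y hy]

open MeasureTheory Filter Set

/-- determination of the kernel difference from the integral identity.
If the bilinear integral identity holds for all test functions supported in `W^e`, then
`∇(K₁-K₂)` vanishes on differences of points of `W^e`, and hence `ℛ₁g = ℛ₂g` on `W^e`
for all `g ∈ C_c^∞(W^e)`. -/
theorem kernel_determination
    (We : Set Pt) (hO : IsOpen We) (hne : We.Nonempty) (hper : PeriodicSet We)
    (K₁ K₂ : Pt → ℝ)
    (hK₁per : ∀ x : Pt, ∀ m : ℤ × ℤ, K₁ (x.1 + (m.1 : ℝ), x.2 + (m.2 : ℝ)) = K₁ x)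
    (hK₂per : ∀ x : Pt, ∀ m : ℤ × ℤ, K₂ (x.1 + (m.1 : ℝ), x.2 + (m.2 : ℝ)) = K₂ x)
    (hK₁int : IntegrableOn K₁ cube) (hK₂int : IntegrableOn K₂ cube)
    (hK₁sm : ∀ x : Pt, (¬ ∃ m : ℤ × ℤ, x = ((m.1 : ℝ), (m.2 : ℝ))) →
      ContDiffAt ℝ (⊤ : ℕ∞) K₁ x)
    (hK₂sm : ∀ x : Pt, (¬ ∃ m : ℤ × ℤ, x = ((m.1 : ℝ), (m.2 : ℝ))) →
      ContDiffAt ℝ (⊤ : ℕ∞) K₂ x)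
    (hid : ∀ φ₁ φ₂ φ : Pt → ℂ, TestFunSp We φ₁ → TestFunSp We φ₂ → TestFunSp We φ →
      (∫ x in cube,
        (conv (fun z => K₁ z - K₂ z) φ₁ x *
            (-(pd2 φ₂ x) * pd1 φ x + pd1 φ₂ x * pd2 φ x) +
          conv (fun z => K₁ z - K₂ z) φ₂ x *
            (-(pd2 φ₁ x) * pd1 φ x + pd1 φ₁ x * pd2 φ x))) = 0) :
    (∀ x ∈ We, ∀ y ∈ We,
      (¬ ∃ m : ℤ × ℤ, x.1 - y.1 = (m.1 : ℝ) ∧ x.2 - y.2 = (m.2 : ℝ)) →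
      fderiv ℝ (fun z => K₁ z - K₂ z) (x.1 - y.1, x.2 - y.2) (1, 0) = 0 ∧
      fderiv ℝ (fun z => K₁ z - K₂ z) (x.1 - y.1, x.2 - y.2) (0, 1) = 0) ∧
    (∀ g : Pt → ℂ, TestFunSp We g → ∀ x ∈ We, drift K₁ g x = drift K₂ g x) := by
  have hLper : ∀ x : Pt, ∀ m : ℤ × ℤ,
      (fun z => K₁ z - K₂ z) (x.1 + (m.1 : ℝ), x.2 + (m.2 : ℝ)) = (fun z => K₁ z - K₂ z) x :=
    fun x m => by simp only [hK₁per, hK₂per]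
  have hLint : IntegrableOn (fun z => K₁ z - K₂ z) cube := hK₁int.sub hK₂int
  have hLs : ∀ x, x ∉ latt → ContDiffAt ℝ (⊤ : ℕ∞) (fun z => K₁ z - K₂ z) x :=
    fun x hx => (hK₁sm x hx).sub (hK₂sm x hx)
  have hLd : ∀ x, x ∉ latt → DifferentiableAt ℝ (fun z => K₁ z - K₂ z) x :=
    fun x hx => (hLs x hx).differentiableAt (by simp)
  have part1 := part_one We hO hper _ hLper hLint hLd hid
  refine ⟨fun x hx y hy hxy => part1 x hx y hy ?_, fun g hg x hx => ?_⟩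
  · rintro ⟨m, hm⟩
    exact hxy ⟨m, congrArg Prod.fst hm, congrArg Prod.snd hm⟩
  · have hloc := part_two We hO (fun z => K₁ z - K₂ z) hLd part1 g hg x hx
    have hgb : ∃ C, ∀ y ∈ cube, ‖g y‖ ≤ C := by
      obtain ⟨C, hC⟩ := (isCompact_Icc.prod isCompact_Icc :
        IsCompact (Set.Icc (0:ℝ) 1 ×ˢ Set.Icc (0:ℝ) 1)).exists_bound_of_continuousOn
        hg.smooth.continuous.continuousOn
      exact ⟨C, fun y hy => hC y ⟨Ioc_subset_Icc_self hy.1, Ioc_subset_Icc_self hy.2⟩⟩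
    obtain ⟨C, hC⟩ := hgb
    have hIntg : ∀ K : Pt → ℝ,
        (∀ x : Pt, ∀ m : ℤ × ℤ, K (x.1 + (m.1 : ℝ), x.2 + (m.2 : ℝ)) = K x) →
        IntegrableOn K cube → ∀ x' : Pt,
        IntegrableOn (fun y : Pt => (K (x'.1 - y.1, x'.2 - y.2) : ℂ) * g y) cube := by
      intro K hp hi x'
      refine (K_int K hp hi x').ofReal.mul_bdd (c := C)
        hg.smooth.continuous.aestronglyMeasurable ?_
      exact (ae_restrict_iff' cube_meas).2 (Eventually.of_forall hC)
    have hsum : ∀ x', conv K₁ g x' = conv K₂ g x' + conv (fun z => K₁ z - K₂ z) g x' := by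
      intro x'
      have : conv (fun z => K₁ z - K₂ z) g x' = conv K₁ g x' - conv K₂ g x' := by
        unfold conv
        rw [← integral_sub (hIntg K₁ hK₁per hK₁int x') (hIntg K₂ hK₂per hK₂int x')]
        congr 1
        ext y
        push_cast
        ring
      rw [this]; ring
    have hev : conv K₁ g =ᶠ[nhds x]
        fun x' => conv K₂ g x' + conv (fun z => K₁ z - K₂ z) g x := by
      filter_upwards [hloc] with x' hx'
      rw [hsum, hx']
    have hfd : fderiv ℝ (conv K₁ g) x = fderiv ℝ (conv K₂ g) x := by
      rw [hev.fderiv_eq, fderiv_add_const]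
    simp only [drift, pd1, pd2, hfd]
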